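/- arXiv:2208.11110 — 2 statements merged into one kernel-verified Lean document; each statement's English description precedes it below -/
import Mathlib

section
/- Let α = {α_n}_{n∈ℕ} and β = {β_n}_{n∈ℕ} be sequences of positive real numbers such that α is subadditive, β is superadditive, and for each n ∈ ℕ the value ←β^α_n = inf{d ∈ ℕ : β_d ≥ α_n} is a natural number. Then the sequence ←β^α is subadditive and its asymptotic growth factor satisfies lim_{n→∞} (←β^α_n)/n = α̂/β̂, where α̂ = lim_{n→∞} α_n/n and β̂ = lim_{n→∞} β_n/n (with the conventions r/0 = ∞ and r/∞ = 0 for r ∈ ℝ_{>0}, ∞/0 = ∞, 0/∞ = 0). -/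
open Filter Topology
open scoped ENNReal

/-!
By Fekete's lemma `A ≤ α n / n` and `β d / d ≤ B`. The level `α n` is reached at index `L n`, so
`A ≤ α n / n ≤ β (L n) / n ≤ B * (L n / n)`, which is the lower bound. Conversely, if `0 < β d`
then superadditivity makes `β (k * d) ≥ k * β d ≥ α n` for `k = ⌊α n / β d⌋ + 1`, whence
`L n ≤ k * d ≤ α n / (β d / d) + d`. Dividing by `n` and letting first `n → ∞`, then `d → ∞`,
gives the upper bound `A / B`.
-/

/-- Subadditivity of a sequence indexed by the positive integers. The sequence is encoded as a
function on `ℕ` whose value at `0` is irrelevant, unlike for Mathlib's `Subadditive`. -/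
def SubadditiveOnPos {M : Type*} [Add M] [LE M] (u : ℕ → M) : Prop :=
  ∀ i j, 1 ≤ i → 1 ≤ j → u (i + j) ≤ u i + u j

/-- Superadditivity of a sequence indexed by the positive integers, with the encoding of
`SubadditiveOnPos`. -/
def SuperadditiveOnPos {M : Type*} [Add M] [LE M] (u : ℕ → M) : Prop :=
  ∀ i j, 1 ≤ i → 1 ≤ j → u i + u j ≤ u (i + j)

/-- `l` is the first positive index at which `u` reaches the level `x`. In the notation of the
paper, `←β^α_n = l` is `IsFirstPassage β (α n) l`. -/
def IsFirstPassage {M : Type*} [LE M] (u : ℕ → M) (x : M) (l : ℕ) : Prop :=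
  IsLeast {d : ℕ | 1 ≤ d ∧ x ≤ u d} l

section Multiples

variable {M : Type*} [AddMonoid M] [Preorder M] [AddRightMono M] {u : ℕ → M} {k n : ℕ}

theorem SubadditiveOnPos.map_mul_le_nsmul (hu : SubadditiveOnPos u) (hk : 1 ≤ k) (hn : 1 ≤ n) :
    u (k * n) ≤ k • u n := by
  induction k, hk using Nat.le_induction with
  | base => simp
  | succ k hk ih =>
    calc u ((k + 1) * n) = u (k * n + n) := by rw [add_one_mul]
      _ ≤ u (k * n) + u n := hu _ _ (Nat.mul_pos hk hn) hn
      _ ≤ k • u n + u n := by gcongr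
      _ = (k + 1) • u n := (succ_nsmul _ _).symm

theorem SuperadditiveOnPos.nsmul_le_map_mul (hu : SuperadditiveOnPos u) (hk : 1 ≤ k)
    (hn : 1 ≤ n) : k • u n ≤ u (k * n) :=
  SubadditiveOnPos.map_mul_le_nsmul (M := Mᵒᵈ) hu hk hn

end Multiples

section GrowthFactor

theorem nsmul_div_natCast_mul (x : ℝ≥0∞) {k : ℕ} (hk : 1 ≤ k) (n : ℕ) :
    k • x / ((k * n : ℕ) : ℝ≥0∞) = x / n := by
  rw [nsmul_eq_mul, Nat.cast_mul]
  exact ENNReal.mul_div_mul_left _ _ (Nat.cast_ne_zero.2 (Nat.one_le_iff_ne_zero.1 hk))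
    (ENNReal.natCast_ne_top k)

variable {u : ℕ → ℝ} {A : ℝ≥0∞} {n : ℕ}

theorem SubadditiveOnPos.growthFactor_le (hu : SubadditiveOnPos u)
    (hA : Tendsto (fun m : ℕ => ENNReal.ofReal (u m) / m) atTop (𝓝 A)) (hn : 1 ≤ n) :
    A ≤ ENNReal.ofReal (u n) / n := by
  refine le_of_tendsto (hA.comp (tendsto_id.atTop_mul_const' hn)) ?_
  filter_upwards [eventually_ge_atTop 1] with k hk
  rw [Function.comp_apply, id, ← nsmul_div_natCast_mul (ENNReal.ofReal (u n)) hk,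
    ← ENNReal.ofReal_nsmul]
  gcongr
  exact hu.map_mul_le_nsmul hk hn

theorem SuperadditiveOnPos.le_growthFactor (hu : SuperadditiveOnPos u)
    (hA : Tendsto (fun m : ℕ => ENNReal.ofReal (u m) / m) atTop (𝓝 A)) (hn : 1 ≤ n) :
    ENNReal.ofReal (u n) / n ≤ A := by
  refine ge_of_tendsto (hA.comp (tendsto_id.atTop_mul_const' hn)) ?_
  filter_upwards [eventually_ge_atTop 1] with k hk
  rw [Function.comp_apply, id, ← nsmul_div_natCast_mul (ENNReal.ofReal (u n)) hk,
    ← ENNReal.ofReal_nsmul]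
  gcongr
  exact hu.nsmul_le_map_mul hk hn

theorem limsup_div_natCast_le_of_le_div_add {v w : ℕ → ℝ≥0∞} {A c D : ℝ≥0∞} (hc : c ≠ 0)
    (hD : D ≠ ⊤) (hw : Tendsto (fun n : ℕ => w n / n) atTop (𝓝 A))
    (hvw : ∀ᶠ n in atTop, v n ≤ w n / c + D) :
    limsup (fun n : ℕ => v n / n) atTop ≤ A / c := by
  have hDn : Tendsto (fun n : ℕ => D / (n : ℝ≥0∞)) atTop (𝓝 0) := by
    simpa only [ENNReal.div_top] using
      ENNReal.Tendsto.const_div ENNReal.tendsto_nat_nhds_top (Or.inr hD)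
  have hlim : Tendsto (fun n : ℕ => w n / n / c + D / n) atTop (𝓝 (A / c)) := by
    simpa only [add_zero] using (ENNReal.Tendsto.div_const hw (Or.inr hc)).add hDn
  rw [← hlim.limsup_eq]
  refine limsup_le_limsup ?_
  filter_upwards [hvw] with n hn
  calc v n / n ≤ (w n / c + D) / n := by gcongr
    _ = w n / n / c + D / n := by rw [ENNReal.add_div, ENNReal.div_right_comm]

end GrowthFactor

section FirstPassage

theorem SuperadditiveOnPos.firstPassage_le_add {M : Type*} [Add M] [Preorder M] [AddLeftMono M]
    [AddRightMono M] {u : ℕ → M} (hu : SuperadditiveOnPos u) {x y z : M} {l m r : ℕ}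
    (hx : IsFirstPassage u x l) (hy : IsFirstPassage u y m) (hz : IsFirstPassage u z r)
    (hxyz : z ≤ x + y) : r ≤ l + m :=
  hz.2 ⟨le_add_right hx.1.1,
    hxyz.trans <| (add_le_add hx.1.2 hy.1.2).trans <| hu l m hx.1.1 hy.1.1⟩

variable {u : ℕ → ℝ} {x : ℝ} {l : ℕ}

theorem SuperadditiveOnPos.ofReal_le_firstPassage_mul (hu : SuperadditiveOnPos u) {B : ℝ≥0∞}
    (hB : Tendsto (fun m : ℕ => ENNReal.ofReal (u m) / m) atTop (𝓝 B))
    (hl : IsFirstPassage u x l) : ENNReal.ofReal x ≤ l * B := by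
  obtain ⟨hl_pos, hxl⟩ := hl.1
  have hl_ne : (l : ℝ≥0∞) ≠ 0 := Nat.cast_ne_zero.2 (Nat.one_le_iff_ne_zero.1 hl_pos)
  calc ENNReal.ofReal x ≤ ENNReal.ofReal (u l) := ENNReal.ofReal_le_ofReal hxl
    _ ≤ l * B := (ENNReal.div_le_iff' hl_ne (ENNReal.natCast_ne_top l)).1
        (hu.le_growthFactor hB hl_pos)

theorem SuperadditiveOnPos.firstPassage_le_div_add (hu : SuperadditiveOnPos u)
    (hl : IsFirstPassage u x l) (hx : 0 ≤ x) {d : ℕ} (hd : 1 ≤ d) (hud : 0 < u d) :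
    (l : ℝ) ≤ x / (u d / d) + d := by
  set k := ⌊x / u d⌋₊ + 1 with hk
  have hk_pos : 1 ≤ k := Nat.le_add_left 1 _
  have hxk : x ≤ u (k * d) :=
    calc x ≤ k * u d := by
          rw [← div_le_iff₀ hud, hk, Nat.cast_add_one]
          exact (Nat.lt_floor_add_one _).le
      _ = k • u d := (nsmul_eq_mul _ _).symm
      _ ≤ u (k * d) := hu.nsmul_le_map_mul hk_pos hd
  calc (l : ℝ) ≤ k * d := by exact_mod_cast hl.2 ⟨Nat.mul_pos hk_pos hd, hxk⟩
    _ ≤ (x / u d + 1) * d := by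
        rw [hk, Nat.cast_add_one]
        gcongr
        exact Nat.floor_le (by positivity)
    _ = x / (u d / d) + d := by field_simp

theorem SuperadditiveOnPos.firstPassage_le_ofReal_div_add (hu : SuperadditiveOnPos u)
    (hl : IsFirstPassage u x l) (hx : 0 ≤ x) {d : ℕ} (hd : 1 ≤ d) (hud : 0 < u d) :
    (l : ℝ≥0∞) ≤ ENNReal.ofReal x / (ENNReal.ofReal (u d) / d) + d := by
  have hd_pos : (0 : ℝ) < d := Nat.cast_pos.2 hd
  have h := ENNReal.ofReal_le_ofReal (hu.firstPassage_le_div_add hl hx hd hud)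
  rwa [ENNReal.ofReal_add (by positivity) hd_pos.le, ENNReal.ofReal_div_of_pos (by positivity),
    ENNReal.ofReal_div_of_pos hd_pos, ENNReal.ofReal_natCast, ENNReal.ofReal_natCast] at h

theorem SuperadditiveOnPos.growthFactor_pos (hu : SuperadditiveOnPos u) {B : ℝ≥0∞}
    (hB : Tendsto (fun m : ℕ => ENNReal.ofReal (u m) / m) atTop (𝓝 B))
    (hl : IsFirstPassage u x l) (hx : 0 < x) : 0 < B :=
  pos_of_mul_pos_right
    ((ENNReal.ofReal_pos.2 hx).trans_le (hu.ofReal_le_firstPassage_mul hB hl)) zero_le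

end FirstPassage

section Limit

variable {α β : ℕ → ℝ} {L : ℕ → ℕ} {A B : ℝ≥0∞}

theorem growthFactor_div_le_firstPassage_div (hα : SubadditiveOnPos α)
    (hβ : SuperadditiveOnPos β)
    (hA : Tendsto (fun n : ℕ => ENNReal.ofReal (α n) / n) atTop (𝓝 A))
    (hB : Tendsto (fun n : ℕ => ENNReal.ofReal (β n) / n) atTop (𝓝 B))
    {n l : ℕ} (hn : 1 ≤ n) (hl : IsFirstPassage β (α n) l) : A / B ≤ (l : ℝ≥0∞) / n := by
  refine ENNReal.div_le_of_le_mul ?_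
  calc A ≤ ENNReal.ofReal (α n) / n := hα.growthFactor_le hA hn
    _ ≤ l * B / n := by
        gcongr
        exact hβ.ofReal_le_firstPassage_mul hB hl
    _ = l / n * B := ENNReal.mul_div_right_comm

theorem limsup_firstPassage_div_le (hβ : SuperadditiveOnPos β) (hα_nonneg : ∀ n, 1 ≤ n → 0 ≤ α n)
    (hL : ∀ n, 1 ≤ n → IsFirstPassage β (α n) (L n))
    (hA : Tendsto (fun n : ℕ => ENNReal.ofReal (α n) / n) atTop (𝓝 A))
    (hB : Tendsto (fun n : ℕ => ENNReal.ofReal (β n) / n) atTop (𝓝 B))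
    (hA_top : A ≠ ⊤) (hB_pos : 0 < B) :
    limsup (fun n : ℕ => (L n : ℝ≥0∞) / n) atTop ≤ A / B := by
  refine ge_of_tendsto (ENNReal.Tendsto.const_div hB (Or.inr hA_top)) ?_
  filter_upwards [hB.eventually_const_lt hB_pos, eventually_ge_atTop 1] with d hβd hd
  have hβd_pos : 0 < β d := ENNReal.ofReal_pos.1 (ENNReal.div_pos_iff.1 hβd).1.bot_lt
  refine limsup_div_natCast_le_of_le_div_add hβd.ne' (ENNReal.natCast_ne_top d) hA ?_
  filter_upwards [eventually_ge_atTop 1] with n hn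
  exact hβ.firstPassage_le_ofReal_div_add (hL n hn) (hα_nonneg n hn) hd hβd_pos

end Limit

theorem statement_1_general (α β : ℕ → ℝ) (L : ℕ → ℕ) (hα_pos : ∀ n, 1 ≤ n → 0 < α n)
    (hα : SubadditiveOnPos α) (hβ : SuperadditiveOnPos β)
    (hL : ∀ n, 1 ≤ n → IsFirstPassage β (α n) (L n)) (A B : ℝ≥0∞)
    (hA : Tendsto (fun n : ℕ => ENNReal.ofReal (α n) / (n : ℝ≥0∞)) atTop (𝓝 A))
    (hB : Tendsto (fun n : ℕ => ENNReal.ofReal (β n) / (n : ℝ≥0∞)) atTop (𝓝 B)) :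
    SubadditiveOnPos L ∧
    Tendsto (fun n : ℕ => (L n : ℝ≥0∞) / (n : ℝ≥0∞)) atTop (𝓝 (A / B)) := by
  refine ⟨fun m n hm hn => ?_, tendsto_of_le_liminf_of_limsup_le ?_ ?_⟩
  · exact hβ.firstPassage_le_add (hL m hm) (hL n hn) (hL _ (le_add_right hm)) (hα m n hm hn)
  · refine le_liminf_of_le (h := ?_)
    filter_upwards [eventually_ge_atTop 1] with n hn
    exact growthFactor_div_le_firstPassage_div hα hβ hA hB hn (hL n hn)
  · have hA_top : A ≠ ⊤ := ne_top_of_le_ne_top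
      (ENNReal.div_ne_top ENNReal.ofReal_ne_top (by simp)) (hα.growthFactor_le hA le_rfl)
    have hB_pos : 0 < B := hβ.growthFactor_pos hB (hL 1 le_rfl) (hα_pos 1 le_rfl)
    exact limsup_firstPassage_div_le hβ (fun n hn => (hα_pos n hn).le) hL hA hB hA_top hB_pos

/-- Let `α`, `β` be sequences of positive real numbers (indexed by the
positive naturals) with `α` subadditive and `β` superadditive, and suppose that for each
`n ≥ 1` the quantity `←β^α_n = inf {d ∈ ℕ | β d ≥ α n}` is a natural number, i.e. the set
`{d | 1 ≤ d ∧ α n ≤ β d}` has a least element `L n`.  Then `L` is subadditive and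
`lim L n / n = α̂ / β̂` (division in `ℝ≥0∞`, which realizes the conventions
`r/0 = ∞`, `r/∞ = 0` for `r > 0`, `∞/0 = ∞` and `0/∞ = 0`). -/
theorem statement_1 (α β : ℕ → ℝ) (L : ℕ → ℕ)
    (hαpos : ∀ n, 1 ≤ n → 0 < α n)
    (hβpos : ∀ n, 1 ≤ n → 0 < β n)
    (hαsub : ∀ i j, 1 ≤ i → 1 ≤ j → α (i + j) ≤ α i + α j)
    (hβsuper : ∀ i j, 1 ≤ i → 1 ≤ j → β i + β j ≤ β (i + j))
    (hL : ∀ n, 1 ≤ n → IsLeast {d : ℕ | 1 ≤ d ∧ α n ≤ β d} (L n))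
    (A B : ℝ≥0∞)
    (hA : Tendsto (fun n : ℕ => ENNReal.ofReal (α n) / (n : ℝ≥0∞)) atTop (𝓝 A))
    (hB : Tendsto (fun n : ℕ => ENNReal.ofReal (β n) / (n : ℝ≥0∞)) atTop (𝓝 B)) :
    (∀ m n, 1 ≤ m → 1 ≤ n → L (m + n) ≤ L m + L n) ∧
    Tendsto (fun n : ℕ => (L n : ℝ≥0∞) / (n : ℝ≥0∞)) atTop (𝓝 (A / B)) :=
  statement_1_general α β L hαpos hαsub hβsuper hL A B hA hB
end

section
/- Let K be a field of characteristic zero, R = K[x_0,…,x_N], S = K[y_0,…,y_N], and let I = {I_n}_{n≥1} be a differentially closed graded filtration of homogeneous ideals of R. Put α_n = α(I_n), the initial degree of I_n. Then for a fixed s ≥ 1, the quotient S/L^s(I) has finite length (i.e., is a finite-dimensional K-vector space) if and only if α_n > n + s for all n large enough. In particular, S/L^s(I) has finite length for all s ≥ 1 if and only if the sequence {α_n − n}_{n∈ℕ} is not bounded above. -/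
open MvPolynomial Filter Topology
open scoped ENNReal

/-- The differential operator `D_a = (1/a!) ∂^a/∂x^a`, characterized on monomials by
`D_a (x^b) = C(b,a) · x^(b-a)` when `b ≥ a` componentwise (and `0` otherwise), where
`C(b,a) = ∏ᵢ (bᵢ choose aᵢ)`; note that the binomial coefficient vanishes when
`b ≥ a` fails, so no case split is needed. -/
noncomputable def Dop {m : ℕ} {K : Type*} [CommSemiring K] (a : Fin m →₀ ℕ)
    (f : MvPolynomial (Fin m) K) : MvPolynomial (Fin m) K :=
  ∑ b ∈ f.support,
    MvPolynomial.monomial (b - a) ((((∏ i, Nat.choose (b i) (a i)) : ℕ) : K) * f.coeff b)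

/-- A filtration `{I n}` of ideals of `K[x_0,…,x_{m-1}]` is differentially closed if for
every `n ≥ 1`, every operator `D_a` with `|a| ≤ n - 1`, and every `F ∈ I n`, we have
`D_a F ∈ I (n - |a|)`. -/
def DiffClosed {m : ℕ} {K : Type*} [CommSemiring K]
    (I : ℕ → Ideal (MvPolynomial (Fin m) K)) : Prop :=
  ∀ n, 1 ≤ n → ∀ a : Fin m →₀ ℕ, (a.sum fun _ k => k) ≤ n - 1 →
    ∀ F ∈ I n, Dop a F ∈ I (n - a.sum fun _ k => k)

/-- The iterated partial derivative `∂^a/∂y^a`. -/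
noncomputable def multiPderiv {m : ℕ} {K : Type*} [CommSemiring K] (a : Fin m →₀ ℕ)
    (g : MvPolynomial (Fin m) K) : MvPolynomial (Fin m) K :=
  (List.finRange m).foldl (fun h i => (fun q => MvPolynomial.pderiv i q)^[a i] h) g

/-- The action `F ∘ g` of `R = K[x]` on `S = K[y]` by partial differentiation: the
monomial `x^a` acts on `g` as `∂^a g/∂y^a`, extended linearly. -/
noncomputable def diffAction {m : ℕ} {K : Type*} [CommSemiring K]
    (F g : MvPolynomial (Fin m) K) : MvPolynomial (Fin m) K :=
  ∑ a ∈ F.support, F.coeff a • multiPderiv a g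

/-- The perpendicular space `((I)_d)^⊥ = {g ∈ S_d | F ∘ g = 0 for all F ∈ I_d}` of the
degree-`d` part of an ideal `I ⊆ R`, inside `S_d`, for the differentiation action. -/
def perpSet {m : ℕ} {K : Type*} [CommSemiring K]
    (I : Ideal (MvPolynomial (Fin m) K)) (d : ℕ) : Set (MvPolynomial (Fin m) K) :=
  {g | g ∈ MvPolynomial.homogeneousSubmodule (Fin m) K d ∧
       ∀ F ∈ I, F ∈ MvPolynomial.homogeneousSubmodule (Fin m) K d → diffAction F g = 0}

/-- `L^s(I) = ⊕_{d ≥ s+1} ((I_{d-s})_d)^⊥ ⊆ S`, the (internal direct) sum of the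
perpendicular spaces, realized as the subspace of `S` spanned by them. -/
noncomputable def Lpow {m : ℕ} {K : Type*} [CommSemiring K]
    (I : ℕ → Ideal (MvPolynomial (Fin m) K)) (s : ℕ) :
    Submodule K (MvPolynomial (Fin m) K) :=
  Submodule.span K (⋃ d ∈ Set.Ici (s + 1), perpSet (I (d - s)) d)

/-- An ideal of a polynomial ring is homogeneous when it contains all homogeneous
components of its elements. -/
def IsHomogeneousIdeal {m : ℕ} {K : Type*} [CommSemiring K]
    (I : Ideal (MvPolynomial (Fin m) K)) : Prop :=
  ∀ f ∈ I, ∀ d : ℕ, MvPolynomial.homogeneousComponent d f ∈ I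

/-- The initial degree `α(I) = min {deg f | 0 ≠ f ∈ I}` of an ideal. -/
noncomputable def initialDegree {m : ℕ} {K : Type*} [CommSemiring K]
    (I : Ideal (MvPolynomial (Fin m) K)) : ℕ :=
  sInf {d : ℕ | ∃ f ∈ I, f ≠ 0 ∧ f.totalDegree = d}

/-!
Composing the differentiation action with evaluation at `0` gives the apolar pairing
`⟨F, g⟩ = ∑ₐ a! Fₐ gₐ`; it vanishes between forms of different degrees and, in characteristic zero,
pairs every nonzero form nontrivially with some form of its own degree. A nonzero form of degree
`n + s` in `Iₙ` thus gives a functional vanishing on `L^s(I)` but not on all forms of degree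
`n + s`, and since these degrees differ, forms dual to the functionals have linearly independent
classes in `S / L^s(I)`. So finite length leaves only finitely many `n` with `α(Iₙ) ≤ n + s`.
Conversely, if `(Iₙ)_{n+s} = 0` for all large `n`, then `L^s(I)` contains every form of large
degree.

For the second equivalence, a first partial derivative sends `I_{n+1}` into `I_n` and lowers the
degree, so `α(Iₙ) - n` is nondecreasing as soon as `α(Iₙ)` is positive.
-/

section Degree

variable {σ R : Type*} [CommSemiring R]

theorem exists_mem_support_degree_eq_totalDegree {f : MvPolynomial σ R} (hf : f ≠ 0) :
    ∃ b ∈ f.support, b.degree = f.totalDegree :=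
  let ⟨b, hb, h⟩ := Finset.exists_mem_eq_sup f.support (support_nonempty.2 hf)
    fun a => a.sum fun _ k => k
  ⟨b, hb, h.symm⟩

theorem homogeneousComponent_totalDegree_ne_zero {f : MvPolynomial σ R} (hf : f ≠ 0) :
    homogeneousComponent f.totalDegree f ≠ 0 := by
  obtain ⟨b, hb, hdeg⟩ := exists_mem_support_degree_eq_totalDegree hf
  refine ne_zero_iff.2 ⟨b, ?_⟩
  rw [coeff_homogeneousComponent, if_pos hdeg]
  exact mem_support_iff.1 hb

theorem totalDegree_pderiv_lt {i : σ} {f : MvPolynomial σ R} (h : pderiv i f ≠ 0) :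
    (pderiv i f).totalDegree < f.totalDegree := by
  obtain ⟨b, hb, hdeg⟩ := exists_mem_support_degree_eq_totalDegree h
  have hmem : b + Finsupp.single i 1 ∈ f.support := by
    rw [mem_support_iff, coeff_pderiv] at hb
    exact mem_support_iff.2 (left_ne_zero_of_mul hb)
  have hle : (b + Finsupp.single i 1).degree ≤ f.totalDegree := le_totalDegree hmem
  rwa [map_add, Finsupp.degree_single, hdeg] at hle

theorem exists_pderiv_ne_zero [NoZeroDivisors R] [CharZero R] {f : MvPolynomial σ R}
    (hf : f.totalDegree ≠ 0) : ∃ i, pderiv i f ≠ 0 := by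
  have hf0 : f ≠ 0 := fun h => hf (h ▸ totalDegree_zero)
  obtain ⟨b, hb, hdeg⟩ := exists_mem_support_degree_eq_totalDegree hf0
  have hb0 : b ≠ 0 := fun h => hf (by rw [← hdeg, h, map_zero])
  obtain ⟨i, hi⟩ := Finsupp.ne_iff.1 hb0
  have hle : Finsupp.single i 1 ≤ b := Finsupp.single_le_iff.2 (Nat.one_le_iff_ne_zero.2 hi)
  refine ⟨i, ne_zero_iff.2 ⟨b - Finsupp.single i 1, ?_⟩⟩
  rw [coeff_pderiv, tsub_add_cancel_of_le hle]
  exact mul_ne_zero (mem_support_iff.1 hb) (Nat.cast_add_one_ne_zero _)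

end Degree

theorem finite_quotient_of_homogeneousSubmodule_le {σ R : Type*} [CommRing R] [Finite σ]
    {L : Submodule R (MvPolynomial σ R)} (d₀ : ℕ)
    (hL : ∀ d, d₀ < d → homogeneousSubmodule σ R d ≤ L) :
    Module.Finite R (MvPolynomial σ R ⧸ L) := by
  suffices hsup : L ⊔ restrictTotalDegree σ R d₀ = ⊤ by
    refine Module.Finite.of_surjective (L.mkQ ∘ₗ (restrictTotalDegree σ R d₀).subtype) ?_
    rw [← LinearMap.range_eq_top, LinearMap.range_comp, Submodule.range_subtype,
      Submodule.map_mkQ_eq_top, hsup]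
  refine eq_top_iff.2 fun f _ => ?_
  rw [← sum_homogeneousComponent f]
  refine Submodule.sum_mem _ fun d _ => ?_
  have hd := homogeneousComponent_isHomogeneous d f
  rcases le_or_gt d d₀ with hle | hlt
  · exact Submodule.mem_sup_right ((mem_restrictTotalDegree ..).2 (hd.totalDegree_le.trans hle))
  · exact Submodule.mem_sup_left (hL d hlt hd)

section InitialDegree

variable {m : ℕ} {R : Type*} [CommSemiring R] {J : Ideal (MvPolynomial (Fin m) R)}

theorem initialDegree_le_totalDegree {f : MvPolynomial (Fin m) R} (hf : f ∈ J) (hf0 : f ≠ 0) :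
    initialDegree J ≤ f.totalDegree :=
  Nat.sInf_le ⟨f, hf, hf0, rfl⟩

theorem exists_totalDegree_eq_initialDegree (hJ : J ≠ ⊥) :
    ∃ f ∈ J, f ≠ 0 ∧ f.totalDegree = initialDegree J :=
  let ⟨f, hf, hf0⟩ := Submodule.exists_mem_ne_zero_of_ne_bot hJ
  Nat.sInf_mem (s := {d | ∃ f ∈ J, f ≠ 0 ∧ f.totalDegree = d}) ⟨_, f, hf, hf0, rfl⟩

theorem exists_isHomogeneous_initialDegree (hhom : IsHomogeneousIdeal J) (hJ : J ≠ ⊥) :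
    ∃ f ∈ J, f.IsHomogeneous (initialDegree J) ∧ f ≠ 0 := by
  obtain ⟨f, hf, hf0, hdeg⟩ := exists_totalDegree_eq_initialDegree hJ
  rw [← hdeg]
  exact ⟨_, hhom f hf _, homogeneousComponent_isHomogeneous _ f,
    homogeneousComponent_totalDegree_ne_zero hf0⟩

theorem lt_initialDegree_iff [NeZero m] (hhom : IsHomogeneousIdeal J) (hJ : J ≠ ⊥) {d : ℕ} :
    d < initialDegree J ↔ ∀ f ∈ J, f.IsHomogeneous d → f = 0 := by
  constructor
  · intro hlt f hf hfd
    by_contra hf0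
    exact hlt.not_ge (hfd.totalDegree hf0 ▸ initialDegree_le_totalDegree hf hf0)
  · contrapose!
    intro hle
    obtain ⟨f, hf, hfα, hf0⟩ := exists_isHomogeneous_initialDegree hhom hJ
    refine ⟨f * X 0 ^ (d - initialDegree J), J.mul_mem_right _ hf, ?_, ?_⟩
    · have hmul := hfα.mul (isHomogeneous_X_pow (R := R) (0 : Fin m) (d - initialDegree J))
      rwa [Nat.add_sub_cancel' hle] at hmul
    · exact fun h => hf0 ((isRegular_X_pow _).right.mul_right_eq_zero_iff.1 h)

end InitialDegree

section DifferentialClosure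

variable {m : ℕ}

theorem dop_single_one {R : Type*} [CommSemiring R] (i : Fin m) (f : MvPolynomial (Fin m) R) :
    Dop (Finsupp.single i 1) f = pderiv i f := by
  conv_rhs => rw [f.as_sum, map_sum]
  refine Finset.sum_congr rfl fun b _ => ?_
  have hchoose : ∏ j, (b j).choose (Finsupp.single i 1 j) = b i := by
    rw [Finset.prod_eq_single_of_mem i (Finset.mem_univ i), Finsupp.single_eq_same,
      Nat.choose_one_right]
    intro j _ hj
    rw [Finsupp.single_eq_of_ne hj, Nat.choose_zero_right]
  rw [pderiv_monomial, hchoose, mul_comm]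

namespace DiffClosed

theorem pderiv_mem {R : Type*} [CommSemiring R] {I : ℕ → Ideal (MvPolynomial (Fin m) R)}
    (hI : DiffClosed I) {n : ℕ} (hn : 1 ≤ n) {f : MvPolynomial (Fin m) R} (hf : f ∈ I (n + 1))
    (i : Fin m) : pderiv i f ∈ I n := by
  have hone : ((Finsupp.single i 1 : Fin m →₀ ℕ).sum fun _ k => k) = 1 :=
    Finsupp.sum_single_index rfl
  simpa only [hone, dop_single_one, Nat.add_sub_cancel] using
    hI (n + 1) n.succ_pos (Finsupp.single i 1) (by rwa [hone]) f hf

theorem succ_le [NeZero m] {R : Type*} [CommRing R] {I : ℕ → Ideal (MvPolynomial (Fin m) R)}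
    (hI : DiffClosed I) {n : ℕ} (hn : 1 ≤ n) : I (n + 1) ≤ I n := by
  intro f hf
  have hleibniz : f = pderiv 0 (X 0 * f) - X 0 * pderiv 0 f := by
    rw [pderiv_mul, pderiv_X_self, one_mul, add_sub_cancel_right]
  rw [hleibniz]
  exact sub_mem (hI.pderiv_mem hn (Ideal.mul_mem_left _ _ hf) 0)
    (Ideal.mul_mem_left _ _ (hI.pderiv_mem hn hf 0))

variable [NeZero m] {R : Type*} [CommRing R] [NoZeroDivisors R] [CharZero R]
  {I : ℕ → Ideal (MvPolynomial (Fin m) R)}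

theorem initialDegree_lt_initialDegree_succ (hI : DiffClosed I) {n : ℕ} (hn : 1 ≤ n)
    (hne : I (n + 1) ≠ ⊥) (hpos : 0 < initialDegree (I n)) :
    initialDegree (I n) < initialDegree (I (n + 1)) := by
  obtain ⟨f, hf, hf0, hdeg⟩ := exists_totalDegree_eq_initialDegree hne
  have hfpos : 0 < f.totalDegree :=
    hpos.trans_le (initialDegree_le_totalDegree (hI.succ_le hn hf) hf0)
  obtain ⟨i, hi⟩ := exists_pderiv_ne_zero hfpos.ne'
  calc initialDegree (I n) ≤ (pderiv i f).totalDegree :=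
        initialDegree_le_totalDegree (hI.pderiv_mem hn hf i) hi
    _ < f.totalDegree := totalDegree_pderiv_lt hi
    _ = initialDegree (I (n + 1)) := hdeg

theorem add_lt_initialDegree_of_le (hI : DiffClosed I) (hne : ∀ n, 1 ≤ n → I n ≠ ⊥) {s n k : ℕ}
    (hn : 1 ≤ n) (hnk : n ≤ k) (hlt : n + s < initialDegree (I n)) :
    k + s < initialDegree (I k) := by
  induction k, hnk using Nat.le_induction with
  | base => exact hlt
  | succ k hnk ih =>
    have hstep := hI.initialDegree_lt_initialDegree_succ (hn.trans hnk) (hne _ k.succ_pos)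
      (Nat.zero_lt_of_lt ih)
    omega

end DiffClosed

end DifferentialClosure

section ApolarForm

variable {σ R : Type*}

theorem coeff_iterate_pderiv [CommSemiring R] (i : σ) (k : ℕ) (g : MvPolynomial σ R)
    (b : σ →₀ ℕ) :
    coeff b ((pderiv i)^[k] g) =
      (b i + 1).ascFactorial k * coeff (b + Finsupp.single i k) g := by
  induction k generalizing g with
  | zero => simp
  | succ k ih =>
    rw [Function.iterate_succ_apply, ih, coeff_pderiv, add_assoc, ← Finsupp.single_add,
      Nat.ascFactorial_succ, Finsupp.add_apply, Finsupp.single_eq_same]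
    push_cast
    ring

theorem coeff_foldl_iterate_pderiv [CommSemiring R] (a b : σ →₀ ℕ) {l : List σ} (hl : l.Nodup)
    (g : MvPolynomial σ R) :
    coeff b (l.foldl (fun h i => (pderiv i)^[a i] h) g) =
      (l.map fun i => ((b i + 1).ascFactorial (a i) : R)).prod *
        coeff (b + (l.map fun i => Finsupp.single i (a i)).sum) g := by
  induction l generalizing g with
  | nil => simp
  | cons i l ih =>
    obtain ⟨hil, hl⟩ := List.nodup_cons.1 hl
    have hsum : (l.map fun j => Finsupp.single j (a j)).sum i = 0 := by
      rw [← Finsupp.applyAddHom_apply, map_list_sum, List.map_map]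
      refine List.sum_eq_zero fun x hx => ?_
      obtain ⟨j, hj, rfl⟩ := List.mem_map.1 hx
      exact Finsupp.single_eq_of_ne (ne_of_mem_of_not_mem hj hil).symm
    rw [List.foldl_cons, ih hl, coeff_iterate_pderiv, Finsupp.add_apply, hsum, add_zero,
      List.map_cons, List.map_cons, List.prod_cons, List.sum_cons, add_assoc b,
      add_comm (List.sum _)]
    ring

theorem coeff_zero_multiPderiv {m : ℕ} [CommSemiring R] (a : Fin m →₀ ℕ)
    (g : MvPolynomial (Fin m) R) :
    coeff 0 (multiPderiv a g) = (∏ i, ((a i).factorial : R)) * coeff a g := by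
  refine (coeff_foldl_iterate_pderiv a 0 (List.nodup_finRange m) g).trans ?_
  simp only [Finsupp.zero_apply, zero_add, Nat.one_ascFactorial, ← Fin.prod_univ_def,
    ← Fin.sum_univ_def, Finsupp.univ_sum_single]

/-- The functional `g ↦ ⟨F, g⟩ = ∑ₐ a! Fₐ gₐ` of the apolar pairing, used to detect elements outside
`L^s(I)`. It is given by its coefficient formula rather than as `coeff 0 (diffAction F g)`, so that
linearity in `g` is built in. -/
noncomputable def apolarForm [Fintype σ] [CommSemiring R] (F : MvPolynomial σ R) :
    Module.Dual R (MvPolynomial σ R) :=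
  ∑ a ∈ F.support, (coeff a F * ∏ i, ((a i).factorial : R)) • lcoeff R a

theorem apolarForm_apply [Fintype σ] [CommSemiring R] (F g : MvPolynomial σ R) :
    apolarForm F g = ∑ a ∈ F.support, coeff a F * (∏ i, ((a i).factorial : R)) * coeff a g := by
  simp only [apolarForm, LinearMap.sum_apply, LinearMap.smul_apply, lcoeff_apply, smul_eq_mul]

theorem apolarForm_eq_coeff_zero_diffAction {m : ℕ} [CommSemiring R]
    (F g : MvPolynomial (Fin m) R) : apolarForm F g = coeff 0 (diffAction F g) := by
  simp only [apolarForm_apply, diffAction, coeff_sum, coeff_smul, coeff_zero_multiPderiv,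
    smul_eq_mul, mul_assoc]

theorem apolarForm_eq_zero_of_ne [Fintype σ] [CommSemiring R] {F g : MvPolynomial σ R} {d e : ℕ}
    (hF : F.IsHomogeneous d) (hg : g.IsHomogeneous e) (hde : d ≠ e) : apolarForm F g = 0 := by
  rw [apolarForm_apply]
  refine Finset.sum_eq_zero fun a ha => ?_
  have hdeg : a.degree = d := (hF.degree_eq_sum_deg_support ha).symm
  rw [hg.coeff_eq_zero (hdeg.trans_ne hde), mul_zero]

theorem apolarForm_monomial [Fintype σ] [CommSemiring R] (F : MvPolynomial σ R) (b : σ →₀ ℕ)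
    (c : R) :
    apolarForm F (monomial b c) = coeff b F * (∏ i, ((b i).factorial : R)) * c := by
  classical
  rw [apolarForm_apply, Finset.sum_eq_single b, coeff_monomial, if_pos rfl]
  · intro a _ hab
    rw [coeff_monomial, if_neg hab.symm, mul_zero]
  · intro hb
    rw [notMem_support_iff.1 hb, zero_mul, zero_mul]

theorem exists_isHomogeneous_apolarForm_eq_one [Fintype σ] [Field R] [CharZero R]
    {F : MvPolynomial σ R} {d : ℕ} (hF : F.IsHomogeneous d) (hF0 : F ≠ 0) :
    ∃ g : MvPolynomial σ R, g.IsHomogeneous d ∧ apolarForm F g = 1 := by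
  obtain ⟨b, hb⟩ := ne_zero_iff.1 hF0
  have hc : coeff b F * ∏ i, ((b i).factorial : R) ≠ 0 :=
    mul_ne_zero hb (Finset.prod_ne_zero_iff.2 fun i _ => Nat.cast_ne_zero.2 (b i).factorial_ne_zero)
  have hbd : b.degree = d := (hF.degree_eq_sum_deg_support (mem_support_iff.2 hb)).symm
  exact ⟨monomial b _, isHomogeneous_monomial _ hbd,
    (apolarForm_monomial F b _).trans (mul_inv_cancel₀ hc)⟩

end ApolarForm

section FiniteLength

variable {m : ℕ}

theorem homogeneousSubmodule_le_Lpow {R : Type*} [CommSemiring R]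
    {I : ℕ → Ideal (MvPolynomial (Fin m) R)} {s d : ℕ} (hd : s < d)
    (h : ∀ F ∈ I (d - s), F.IsHomogeneous d → F = 0) :
    homogeneousSubmodule (Fin m) R d ≤ Lpow I s := by
  refine fun g hg => Submodule.subset_span (Set.mem_biUnion (Set.mem_Ici.2 hd) ⟨hg, ?_⟩)
  intro F hF hFd
  rw [h F hF hFd, diffAction, support_zero, Finset.sum_empty]

theorem Lpow_le_ker_apolarForm {R : Type*} [CommSemiring R]
    {I : ℕ → Ideal (MvPolynomial (Fin m) R)} {s n : ℕ} {F : MvPolynomial (Fin m) R}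
    (hF : F ∈ I n) (hFd : F.IsHomogeneous (n + s)) :
    Lpow I s ≤ LinearMap.ker (apolarForm F) := by
  refine Submodule.span_le.2 (Set.iUnion₂_subset fun d _ g hg => LinearMap.mem_ker.2 ?_)
  obtain ⟨hgd, hperp⟩ := hg
  by_cases hnd : n + s = d
  · subst hnd
    rw [Nat.add_sub_cancel] at hperp
    rw [apolarForm_eq_coeff_zero_diffAction, hperp F hF hFd, coeff_zero]
  · exact apolarForm_eq_zero_of_ne hFd hgd hnd

variable {K : Type*} [Field K] [CharZero K] (I : ℕ → Ideal (MvPolynomial (Fin m) K)) (s : ℕ)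

theorem finite_setOf_exists_isHomogeneous [Module.Finite K (MvPolynomial (Fin m) K ⧸ Lpow I s)] :
    {n | ∃ F ∈ I n, F.IsHomogeneous (n + s) ∧ F ≠ 0}.Finite := by
  set D := {n | ∃ F ∈ I n, F.IsHomogeneous (n + s) ∧ F ≠ 0}
  choose F hF hFd hF0 using fun n : D => n.2
  choose g hgd hg using fun n : D => exists_isHomogeneous_apolarForm_eq_one (hFd n) (hF0 n)
  have hindep : LinearIndependent K fun n : D => (Lpow I s).mkQ (g n) := by
    refine LinearIndependent.of_pairwise_dual_eq_zero_one _
      (fun n => (Lpow I s).liftQ (apolarForm (F n)) (Lpow_le_ker_apolarForm (hF n) (hFd n)))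
      (fun n k hnk => ?_) hg
    refine apolarForm_eq_zero_of_ne (hFd n) (hgd k) fun h => hnk (Subtype.ext ?_)
    exact Nat.add_right_cancel h
  exact hindep.finite_of_isNoetherian

theorem finite_quotient_Lpow_iff :
    Module.Finite K (MvPolynomial (Fin m) K ⧸ Lpow I s) ↔
      ∀ᶠ n in atTop, ∀ F ∈ I n, F.IsHomogeneous (n + s) → F = 0 := by
  constructor
  · intro hfin
    rw [← Nat.cofinite_eq_atTop, eventually_cofinite]
    simpa only [not_forall, exists_prop] using finite_setOf_exists_isHomogeneous I s
  · intro h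
    obtain ⟨n₀, hn₀⟩ := eventually_atTop.1 h
    refine finite_quotient_of_homogeneousSubmodule_le (n₀ + s) fun d hd => ?_
    refine homogeneousSubmodule_le_Lpow (by omega) fun F hF hFd => hn₀ (d - s) (by omega) F hF ?_
    rwa [Nat.sub_add_cancel (by omega)]

variable {I}

theorem finite_quotient_Lpow_iff_eventually_lt_initialDegree [NeZero m]
    (hhom : ∀ n, 1 ≤ n → IsHomogeneousIdeal (I n)) (hne : ∀ n, 1 ≤ n → I n ≠ ⊥) :
    Module.Finite K (MvPolynomial (Fin m) K ⧸ Lpow I s) ↔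
      ∀ᶠ n in atTop, n + s < initialDegree (I n) := by
  rw [finite_quotient_Lpow_iff]
  refine eventually_congr ((eventually_ge_atTop 1).mono fun n hn => ?_)
  exact (lt_initialDegree_iff (hhom n hn) (hne n hn)).symm

end FiniteLength

theorem statement_13_general {m : ℕ} [NeZero m] {K : Type*} [Field K] [CharZero K]
    {I : ℕ → Ideal (MvPolynomial (Fin m) K)}
    (hhom : ∀ n, 1 ≤ n → IsHomogeneousIdeal (I n))
    (hne : ∀ n, 1 ≤ n → I n ≠ ⊥)
    (hdc : DiffClosed I) :
    (∀ s, Module.Finite K (MvPolynomial (Fin m) K ⧸ Lpow I s) ↔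
      ∀ᶠ n in atTop, n + s < initialDegree (I n)) ∧
    ((∀ s, 1 ≤ s → Module.Finite K (MvPolynomial (Fin m) K ⧸ Lpow I s)) ↔
      ∀ C : ℕ, ∃ n, 1 ≤ n ∧ n + C < initialDegree (I n)) := by
  have hiff (s : ℕ) := finite_quotient_Lpow_iff_eventually_lt_initialDegree s hhom hne
  refine ⟨hiff, fun hfin C => ?_, fun hunbdd s _ => ?_⟩
  · obtain ⟨n, hlt, hn⟩ :=
      (((hiff (C + 1)).1 (hfin _ C.succ_pos)).and (eventually_ge_atTop 1)).exists
    exact ⟨n, hn, by omega⟩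
  · obtain ⟨n, hn, hlt⟩ := hunbdd s
    exact (hiff s).2 <| eventually_atTop.2
      ⟨n, fun k hnk => hdc.add_lt_initialDegree_of_le hne hn hnk hlt⟩

/-- (Lemma `FiniteLength`.)  Over a field `K` of characteristic zero,
let `{I n}` be a differentially closed graded filtration of (nonzero) homogeneous ideals
of `R = K[x_0,…,x_N]` and put `α_n = α(I_n)`, the initial degree.  Then for fixed
`s ≥ 1`, the quotient `S / L^s(I)` has finite length (equivalently, is a
finite-dimensional `K`-vector space) if and only if `α_n > n + s` for all `n` large
enough.  In particular, `S / L^s(I)` has finite length for all `s ≥ 1` if and only if the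
sequence `{α_n - n}` is not bounded above. -/
theorem statement_13 {N : ℕ} {K : Type*} [Field K] [CharZero K]
    (I : ℕ → Ideal (MvPolynomial (Fin (N + 1)) K))
    (hfil : ∀ n, 1 ≤ n → I (n + 1) ≤ I n)
    (hgr : ∀ m n, 1 ≤ m → 1 ≤ n → I m * I n ≤ I (m + n))
    (hhom : ∀ n, 1 ≤ n → IsHomogeneousIdeal (I n))
    (hne : ∀ n, 1 ≤ n → I n ≠ ⊥)
    (hdc : DiffClosed I) :
    (∀ s, 1 ≤ s →
      (Module.Finite K (MvPolynomial (Fin (N + 1)) K ⧸ Lpow I s) ↔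
        ∀ᶠ n in atTop, n + s < initialDegree (I n))) ∧
    ((∀ s, 1 ≤ s → Module.Finite K (MvPolynomial (Fin (N + 1)) K ⧸ Lpow I s)) ↔
      ∀ C : ℕ, ∃ n, 1 ≤ n ∧ n + C < initialDegree (I n)) := by
  have hgen := statement_13_general hhom hne hdc
  exact ⟨fun s _ => hgen.1 s, hgen.2⟩
end
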